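/- arXiv:1910.13469 — 3 statements merged into one kernel-verified Lean document; each statement's English description precedes it below -/
import Mathlib

section
/- Let 0 < β < 1 and let φ : ℝ → ℝ be the unique function satisfying φ(x) = tanh(β·(x + φ(x))) for every x ∈ ℝ. Then φ is twice differentiable on ℝ and for every x ∈ ℝ, φ″(x) = −2β²·φ(x)·(1 − φ(x)²)/(1 − β·(1 − φ(x)²))³. -/
theorem aux_tanh_deriv (u : ℝ) : HasDerivAt Real.tanh (1 - Real.tanh u ^ 2) u := by
  have hc : Real.cosh u ≠ 0 := (Real.cosh_pos u).ne'
  have h := (Real.hasDerivAt_sinh u).div (Real.hasDerivAt_cosh u) hc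
  have e : Real.tanh = Real.sinh / Real.cosh := by
    funext y
    simp [Real.tanh_eq_sinh_div_cosh]
  have e2 : 1 - Real.tanh u ^ 2 =
      (Real.cosh u * Real.cosh u - Real.sinh u * Real.sinh u) / Real.cosh u ^ 2 := by
    rw [Real.tanh_eq_sinh_div_cosh]
    field_simp
  rw [e2, e]
  exact h

theorem aux_tanh_sq (u : ℝ) : Real.tanh u ^ 2 < 1 := by
  have := Real.tanh_lt_one u
  have := Real.neg_one_lt_tanh u
  nlinarith

theorem aux_tanh_lip (a b : ℝ) : |Real.tanh a - Real.tanh b| ≤ |a - b| := by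
  have := Convex.norm_image_sub_le_of_norm_hasDerivWithin_le (f := Real.tanh)
    (f' := fun u => 1 - Real.tanh u ^ 2) (C := 1) (s := Set.univ) (x := b) (y := a)
    (fun u _ => (aux_tanh_deriv u).hasDerivWithinAt)
    (fun u _ => by
      have := aux_tanh_sq u
      rw [Real.norm_eq_abs, abs_le]
      constructor <;> nlinarith [sq_nonneg (Real.tanh u)])
    convex_univ trivial trivial
  simpa [Real.norm_eq_abs] using this

theorem aux_deriv (β : ℝ) (h0 : 0 < β) (h1 : β < 1) (φ : ℝ → ℝ)
    (hφ : ∀ x, φ x = Real.tanh (β * (x + φ x))) (x : ℝ) :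
    HasDerivAt φ ((1 - β * (1 - (φ x)^2))⁻¹ - 1) x := by
  have hcont : Continuous φ := by
    have hl : LipschitzWith (Real.toNNReal (β / (1 - β))) φ := by
      apply LipschitzWith.of_dist_le_mul
      intro x y
      have hb : 0 < 1 - β := by linarith
      rw [Real.coe_toNNReal _ (by positivity), Real.dist_eq, Real.dist_eq]
      have h := aux_tanh_lip (β * (x + φ x)) (β * (y + φ y))
      rw [← hφ, ← hφ, ← mul_sub, abs_mul, abs_of_pos h0] at h
      have h2 : |x + φ x - (y + φ y)| ≤ |x - y| + |φ x - φ y| := by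
        rw [show x + φ x - (y + φ y) = (x - y) + (φ x - φ y) by ring]
        exact abs_add_le _ _
      rw [div_mul_eq_mul_div, le_div_iff₀ hb]
      nlinarith
    exact hl.continuous
  have hm : φ x ^ 2 < 1 := by rw [hφ]; exact aux_tanh_sq _
  have hD : 0 < 1 - β * (1 - (φ x)^2) := by nlinarith [sq_nonneg (φ x)]
  have hf : HasDerivAt (fun u => u - Real.tanh (β * u)) (1 - (1 - (φ x)^2) * β) (x + φ x) := by
    have h := aux_tanh_deriv (β * (x + φ x))
    rw [← hφ] at h
    have hl : HasDerivAt (fun u : ℝ => β * u) β (x + φ x) := by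
      simpa using (hasDerivAt_id (x + φ x)).const_mul β
    exact (hasDerivAt_id _).sub (h.comp (x + φ x) hl)
  have hg := HasDerivAt.of_local_left_inverse (g := fun y => y + φ y) (a := x)
    (by fun_prop) hf (by nlinarith)
    (Filter.Eventually.of_forall fun y => by rw [← hφ]; ring)
  have := hg.sub (hasDerivAt_id x)
  rw [mul_comm β]
  have e : φ = (fun y => y + φ y) - id := by
    funext y
    simp
  exact this.congr_of_eventuallyEq (Filter.Eventually.of_forall fun y => congrFun e y)

/-- Subcritical case 0 < β < 1: the unique solution φ of φ(x) = tanh(β(x + φ(x))) is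
twice differentiable with φ″(x) = −2β²φ(x)(1 − φ(x)²)/(1 − β(1 − φ(x)²))³. -/
theorem invariant_curve_second_deriv (β : ℝ) (h0 : 0 < β) (h1 : β < 1) (φ : ℝ → ℝ)
    (hφ : ∀ x, φ x = Real.tanh (β * (x + φ x))) :
    (∀ x, DifferentiableAt ℝ φ x) ∧ (∀ x, DifferentiableAt ℝ (deriv φ) x) ∧
    ∀ x, deriv (deriv φ) x =
      -2 * β^2 * φ x * (1 - (φ x)^2) / (1 - β * (1 - (φ x)^2))^3 := by
  have hd := aux_deriv β h0 h1 φ hφ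
  have e : deriv φ = fun x => (1 - β * (1 - (φ x)^2))⁻¹ - 1 := funext fun x => (hd x).deriv
  have h2 : ∀ x, HasDerivAt (deriv φ)
      (-2 * β^2 * φ x * (1 - (φ x)^2) / (1 - β * (1 - (φ x)^2))^3) x := by
    intro x
    have hD : 1 - β * (1 - (φ x)^2) ≠ 0 := by nlinarith [sq_nonneg (φ x)]
    rw [e]
    have h := ((((((hd x).pow 2).const_sub 1).const_mul β).const_sub 1).inv hD).sub_const 1
    refine h.congr_deriv ?_
    simp only [Pi.pow_apply]
    generalize hDD : 1 - β * (1 - (φ x)^2) = D at *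
    have : β * (1 - (φ x)^2) = 1 - D := by linarith
    rw [show -2 * β^2 * φ x * (1 - (φ x)^2) = -2 * β * φ x * (β * (1 - (φ x)^2)) by ring, this]
    field_simp
    push_cast
    ring
  exact ⟨fun x => (hd x).differentiableAt, fun x => (h2 x).differentiableAt,
    fun x => (h2 x).deriv⟩
end

section
/- Let β > 1, m_a := √(1 − 1/β), λ_a := (1/β)·artanh(√(1 − 1/β)), define g : (−1,1) → ℝ by g(y) := 2βy − 2β(m_a − λ_a) − log(1+y) + log(1−y), let m_b be the unique zero of g in (−1,1) distinct from m_a, and for ε > 0 set f := g − βε on (−1,1). Then f has a unique zero m* ∈ (−1,1); moreover m* < m_b, f(y) > 0 for y ∈ (−1, m*), f(y) < 0 for y ∈ (m*, 1), and f(y) < 0 for every y ∈ [0,1). -/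
/-- Inverse hyperbolic tangent: artanh(y) = (1/2)·log((1+y)/(1−y)). -/
noncomputable def artanh (y : ℝ) : ℝ := (1/2) * Real.log ((1 + y) / (1 - y))

/-- The critical ordinate m_a(β) = √(1 − 1/β). -/
noncomputable def mCrit (β : ℝ) : ℝ := Real.sqrt (1 - 1/β)

/-- The critical abscissa λ_a(β) = (1/β)·artanh(√(1 − 1/β)). -/
noncomputable def lCrit (β : ℝ) : ℝ := (1/β) * artanh (Real.sqrt (1 - 1/β))

/-- The function g(y) = 2βy − 2β(m_a − λ_a) − log(1+y) + log(1−y). -/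
noncomputable def gJump (β : ℝ) (y : ℝ) : ℝ :=
  2 * β * y - 2 * β * (mCrit β - lCrit β) - Real.log (1 + y) + Real.log (1 - y)

/-- The perturbed function f = g − βε. -/
noncomputable def fJump (β ε : ℝ) (y : ℝ) : ℝ := gJump β y - β * ε

theorem gJump_hasDeriv (β y : ℝ) (h1 : -1 < y) (h2 : y < 1) :
    HasDerivAt (gJump β) (2 * β - 1 / (1 + y) + (-1) / (1 - y)) y := by
  have e1 : HasDerivAt (fun y : ℝ => 1 + y) 1 y := (hasDerivAt_id y).const_add 1
  have e2 : HasDerivAt (fun y : ℝ => 1 - y) (-1) y := (hasDerivAt_id y).const_sub 1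
  have e3 : HasDerivAt (fun y : ℝ => 2 * β * y) (2 * β) y := by
    simpa using (hasDerivAt_id y).const_mul (2 * β)
  exact ((e3.sub_const _).sub (e1.log (by linarith))).add (e2.log (by linarith))

theorem gJump_deriv_eq (β y : ℝ) (hβ : 1 < β) (h1 : -1 < y) (h2 : y < 1) :
    deriv (gJump β) y = 2 * β / (1 - y ^ 2) * (mCrit β ^ 2 - y ^ 2) := by
  rw [(gJump_hasDeriv β y h1 h2).deriv]
  have hm : mCrit β ^ 2 = 1 - 1 / β := by
    unfold mCrit
    rw [Real.sq_sqrt]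
    rw [sub_nonneg, div_le_one (by linarith)]
    linarith
  rw [hm]
  have a : 1 + y ≠ 0 := by linarith
  have b : 1 - y ≠ 0 := by linarith
  have c : β ≠ 0 := by linarith
  have d : 1 - y ^ 2 = (1 + y) * (1 - y) := by ring
  rw [d]
  field_simp
  ring

theorem gJump_crit (β : ℝ) (hβ : 1 < β) (h0 : 0 < mCrit β) (h1 : mCrit β < 1) :
    gJump β (mCrit β) = 0 := by
  have hl : lCrit β = (1 / β) * ((1 / 2) * Real.log ((1 + mCrit β) / (1 - mCrit β))) := rfl
  unfold gJump
  rw [hl, Real.log_div (by linarith) (by linarith)]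
  have c : β ≠ 0 := by linarith
  field_simp
  ring

/-- For β > 1 and ε > 0, with m_b the unique zero of g in (−1,1) distinct from m_a:
the perturbed function f = g − βε has a unique zero m* ∈ (−1,1); moreover m* < m_b,
f > 0 on (−1, m*), f < 0 on (m*, 1), and f < 0 on [0,1). -/
theorem fJump_unique_zero (β ε : ℝ) (hβ : 1 < β) (hε : 0 < ε) (m_b : ℝ)
    (hmb : m_b ∈ Set.Ioo (-1 : ℝ) 1) (hne : m_b ≠ mCrit β) (hzero : gJump β m_b = 0)
    (huniq : ∀ y ∈ Set.Ioo (-1 : ℝ) 1, y ≠ mCrit β → gJump β y = 0 → y = m_b) :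
    ∃ mstar ∈ Set.Ioo (-1 : ℝ) 1,
      fJump β ε mstar = 0 ∧
      (∀ y ∈ Set.Ioo (-1 : ℝ) 1, fJump β ε y = 0 → y = mstar) ∧
      mstar < m_b ∧
      (∀ y ∈ Set.Ioo (-1 : ℝ) mstar, 0 < fJump β ε y) ∧
      (∀ y ∈ Set.Ioo mstar 1, fJump β ε y < 0) ∧
      (∀ y ∈ Set.Ico (0 : ℝ) 1, fJump β ε y < 0) := by
  have hβ0 : 0 < β := by linarith
  have hm0 : 0 < mCrit β := by
    unfold mCrit
    apply Real.sqrt_pos.2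
    rw [sub_pos, div_lt_one hβ0]
    exact hβ
  have hm1 : mCrit β < 1 := by
    unfold mCrit
    rw [Real.sqrt_lt' one_pos]
    have : 0 < 1 / β := by positivity
    linarith
  have hcrit := gJump_crit β hβ hm0 hm1
  have hder := fun y => gJump_deriv_eq β y hβ
  have hcont : ContinuousOn (gJump β) (Set.Ioo (-1) 1) := fun y hy =>
    (gJump_hasDeriv β y hy.1 hy.2).continuousAt.continuousWithinAt
  set m := mCrit β with hmdef
  have hfac : ∀ y : ℝ, -1 < y → y < 1 → 0 < 2 * β / (1 - y ^ 2) := by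
    intro y h1 h2
    have : 0 < 1 - y ^ 2 := by nlinarith
    positivity
  have anti1 : StrictAntiOn (gJump β) (Set.Ioc (-1) (-m)) := by
    apply strictAntiOn_of_deriv_neg (convex_Ioc _ _)
    · exact hcont.mono fun y hy => ⟨hy.1, by linarith [hy.2]⟩
    · intro y hy
      rw [interior_Ioc] at hy
      have h2 : y < 1 := by linarith [hy.2]
      rw [hder y hy.1 h2]
      exact mul_neg_of_pos_of_neg (hfac y hy.1 h2) (by nlinarith [hy.2])
  have mono2 : StrictMonoOn (gJump β) (Set.Icc (-m) m) := by
    apply strictMonoOn_of_deriv_pos (convex_Icc _ _)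
    · exact hcont.mono fun y hy => ⟨by linarith [hy.1], by linarith [hy.2]⟩
    · intro y hy
      rw [interior_Icc] at hy
      have h1 : -1 < y := by linarith [hy.1]
      have h2 : y < 1 := by linarith [hy.2]
      rw [hder y h1 h2]
      exact mul_pos (hfac y h1 h2) (by nlinarith [hy.1, hy.2])
  have anti3 : StrictAntiOn (gJump β) (Set.Ico m 1) := by
    apply strictAntiOn_of_deriv_neg (convex_Ico _ _)
    · exact hcont.mono fun y hy => ⟨by linarith [hy.1], hy.2⟩
    · intro y hy
      rw [interior_Ico] at hy
      have h1 : -1 < y := by linarith [hy.1]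
      rw [hder y h1 hy.2]
      exact mul_neg_of_pos_of_neg (hfac y h1 hy.2) (by nlinarith [hy.1])
  have gneg : ∀ y, -m ≤ y → y < 1 → y ≠ m → gJump β y < 0 := by
    intro y h1 h2 h3
    rcases lt_or_gt_of_ne h3 with h | h
    · rw [← hcrit]
      exact mono2 ⟨h1, h.le⟩ ⟨by linarith, le_rfl⟩ h
    · rw [← hcrit]
      exact anti3 ⟨le_rfl, hm1⟩ ⟨h.le, h2⟩ h
  have hβε : 0 < β * ε := mul_pos hβ0 hε
  have fneg : ∀ y, -m ≤ y → y < 1 → fJump β ε y < 0 := by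
    intro y h1 h2
    unfold fJump
    by_cases h : y = m
    · rw [h, hcrit]; linarith
    · linarith [gneg y h1 h2 h]
  have fanti : StrictAntiOn (fJump β ε) (Set.Ioc (-1) (-m)) := by
    intro x hx y hy hxy
    have := anti1 hx hy hxy
    unfold fJump
    linarith
  have hmbm : m_b < -m := by
    by_contra h
    have := gneg m_b (not_lt.1 h) hmb.2 hne
    linarith
  have hfmb : fJump β ε m_b < 0 := by
    unfold fJump; linarith
  -- a point near -1 where f is positive
  obtain ⟨z, hz1, hz2, hz3⟩ : ∃ z : ℝ, -1 < z ∧ z < 1 ∧ 0 < fJump β ε z := by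
    set C := 2 * β * (mCrit β - lCrit β) with hC
    set K := 2 * β + |C| + β * ε + 1 with hK
    have hKpos : 0 < K := by positivity
    have he : Real.exp (-K) < 1 := by
      rw [Real.exp_lt_one_iff]; linarith
    have hep := Real.exp_pos (-K)
    refine ⟨Real.exp (-K) - 1, by linarith, by linarith, ?_⟩
    unfold fJump gJump
    rw [← hC, show 1 + (Real.exp (-K) - 1) = Real.exp (-K) by ring, Real.log_exp]
    have h1 : 0 ≤ Real.log (1 - (Real.exp (-K) - 1)) := Real.log_nonneg (by linarith)
    have h2 := le_abs_self C
    have h3 : 0 < 2 * β * Real.exp (-K) := by positivity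
    linarith
  have hzm : z < -m := by
    by_contra h
    linarith [fneg z (not_lt.1 h) hz2]
  have hzb : z < m_b := by
    by_contra h
    have := fanti.antitoneOn ⟨hmb.1, hmbm.le⟩ ⟨hz1, hzm.le⟩ (not_lt.1 h)
    linarith
  have hfc : ContinuousOn (fJump β ε) (Set.Icc z m_b) := by
    unfold fJump
    exact (hcont.mono fun y hy => ⟨by linarith [hy.1], by linarith [hy.2, hmb.2]⟩).sub
      continuousOn_const
  obtain ⟨s, hs, hs0⟩ := intermediate_value_Icc' hzb.le hfc ⟨hfmb.le, hz3.le⟩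
  have hsb : s < m_b := lt_of_le_of_ne hs.2 (by rintro rfl; linarith)
  have hs1 : -1 < s := by linarith [hs.1]
  have hsm : s ∈ Set.Ioc (-1) (-m) := ⟨hs1, by linarith⟩
  have hpos : ∀ y ∈ Set.Ioo (-1 : ℝ) s, 0 < fJump β ε y := by
    intro y hy
    rw [← hs0]
    exact fanti ⟨hy.1, by linarith [hy.2]⟩ hsm hy.2
  have hneg : ∀ y ∈ Set.Ioo s 1, fJump β ε y < 0 := by
    intro y hy
    rcases le_total y (-m) with h | h
    · rw [← hs0]
      exact fanti hsm ⟨by linarith [hy.1], h⟩ hy.1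
    · exact fneg y h hy.2
  refine ⟨s, ⟨hs1, by linarith⟩, hs0, ?_, hsb, hpos, hneg, fun y hy => fneg y (by linarith [hy.1]) hy.2⟩
  intro y hy h0
  rcases lt_trichotomy y s with h | h | h
  · linarith [hpos y ⟨hy.1, h⟩]
  · exact h
  · linarith [hneg y ⟨h, hy.2⟩]
end

section
/- Let β₁, β₂ ≥ 0 with β₁ + β₂ < 1 and let μ be a Borel probability measure on ℝ. Then there exists exactly one bounded measurable function m : ℝ → [−1,1] such that m(x) = tanh(β₁(x + m(x)) + β₂·∫ m dμ) for every x ∈ ℝ; moreover this m is continuous and takes values in (−1,1). -/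
open MeasureTheory

lemma aux_tanh_lip_s13 (x y : ℝ) : |Real.tanh x - Real.tanh y| ≤ |x - y| := by
  have hd : ∀ z : ℝ, HasDerivAt Real.tanh (1 / Real.cosh z ^ 2) z := by
    intro z
    have h := (Real.hasDerivAt_sinh z).div (Real.hasDerivAt_cosh z) (Real.cosh_pos z).ne'
    have e : Real.tanh = Real.sinh / Real.cosh := by
      funext w
      simp [Real.tanh_eq_sinh_div_cosh]
    rw [e]
    have e2 : Real.cosh z * Real.cosh z - Real.sinh z * Real.sinh z = 1 := by
      have := Real.cosh_sq z
      linarith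
    rwa [e2] at h
  have hb : ∀ z ∈ (Set.univ : Set ℝ), ‖(1 / Real.cosh z ^ 2 : ℝ)‖ ≤ 1 := by
    intro z _
    have h1 : 1 ≤ Real.cosh z ^ 2 := one_le_pow₀ (Real.one_le_cosh z)
    rw [Real.norm_of_nonneg (by positivity)]
    exact div_le_one_of_le₀ h1 (by positivity)
  have := convex_univ.norm_image_sub_le_of_norm_hasDerivWithin_le
    (fun z _ => (hd z).hasDerivWithinAt) hb (Set.mem_univ y) (Set.mem_univ x)
  simpa [Real.norm_eq_abs] using this

lemma aux_tanh_mem (x : ℝ) : Real.tanh x ∈ Set.Ioo (-1 : ℝ) 1 :=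
  Real.tanh_bijOn.mapsTo (Set.mem_univ x)

lemma aux_contr (β₁ β₂ : ℝ) (h₁ : 0 ≤ β₁) (h₂ : 0 ≤ β₂)
    (μ : Measure ℝ) [IsProbabilityMeasure μ] (f g : ℝ → ℝ) (hf : Integrable f μ)
    (hg : Integrable g μ) (C : ℝ) (hC : ∀ x, |f x - g x| ≤ C) (x : ℝ) :
    |Real.tanh (β₁ * (x + f x) + β₂ * ∫ y, f y ∂μ) -
      Real.tanh (β₁ * (x + g x) + β₂ * ∫ y, g y ∂μ)| ≤ (β₁ + β₂) * C := by
  refine (aux_tanh_lip_s13 _ _).trans ?_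
  have hi : |(∫ y, f y ∂μ) - ∫ y, g y ∂μ| ≤ C := by
    rw [← integral_sub hf hg]
    have := norm_integral_le_of_norm_le_const (μ := μ) (f := fun y => f y - g y) (C := C)
      (Filter.Eventually.of_forall hC)
    simpa using this
  have e : β₁ * (x + f x) + β₂ * (∫ y, f y ∂μ) - (β₁ * (x + g x) + β₂ * ∫ y, g y ∂μ)
      = β₁ * (f x - g x) + β₂ * ((∫ y, f y ∂μ) - ∫ y, g y ∂μ) := by ring
  rw [e]
  refine (abs_add_le _ _).trans ?_
  rw [abs_mul, abs_mul, abs_of_nonneg h₁, abs_of_nonneg h₂, add_mul]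
  gcongr
  exact hC x

lemma aux_tanh_cont : Continuous Real.tanh := by
  have : LipschitzWith 1 Real.tanh := LipschitzWith.of_dist_le_mul (by
    intro x y
    simpa [Real.dist_eq] using aux_tanh_lip_s13 x y)
  exact this.continuous

/-- The fixed-point map on bounded continuous functions. -/
noncomputable def auxMap (β₁ β₂ : ℝ) (μ : Measure ℝ) (f : BoundedContinuousFunction ℝ ℝ) :
    BoundedContinuousFunction ℝ ℝ :=
  BoundedContinuousFunction.ofNormedAddCommGroup
    (fun x => Real.tanh (β₁ * (x + f x) + β₂ * ∫ y, f y ∂μ))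
    (aux_tanh_cont.comp (by fun_prop)) 1
    (fun x => abs_le.2 ⟨(aux_tanh_mem _).1.le, (aux_tanh_mem _).2.le⟩)

/-- Well-posedness of the order-N limit fixed-point equation of the two-level hierarchical
model (β₁ + β₂ < 1): there is exactly one bounded measurable m : ℝ → [−1,1] with
m(x) = tanh(β₁(x + m(x)) + β₂∫m dμ) for all x; moreover it is continuous with values
in (−1,1). -/
theorem order_N_fixed_point_wellposed (β₁ β₂ : ℝ) (h₁ : 0 ≤ β₁) (h₂ : 0 ≤ β₂)
    (hsub : β₁ + β₂ < 1) (μ : Measure ℝ) [IsProbabilityMeasure μ] :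
    ∃ m : ℝ → ℝ,
      (Measurable m ∧ (∀ x, m x ∈ Set.Icc (-1 : ℝ) 1) ∧
        ∀ x, m x = Real.tanh (β₁ * (x + m x) + β₂ * ∫ y, m y ∂μ)) ∧
      (∀ n : ℝ → ℝ, Measurable n → (∀ x, n x ∈ Set.Icc (-1 : ℝ) 1) →
        (∀ x, n x = Real.tanh (β₁ * (x + n x) + β₂ * ∫ y, n y ∂μ)) → n = m) ∧
      Continuous m ∧ (∀ x, m x ∈ Set.Ioo (-1 : ℝ) 1) := by
  have hK : 0 ≤ β₁ + β₂ := by positivity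
  have hlip : LipschitzWith ⟨β₁ + β₂, hK⟩ (auxMap β₁ β₂ μ) := by
    refine LipschitzWith.of_dist_le_mul fun f g => ?_
    refine (BoundedContinuousFunction.dist_le (by positivity)).2 fun x => ?_
    exact aux_contr β₁ β₂ h₁ h₂ μ f g (f.integrable μ) (g.integrable μ) (dist f g)
      (fun x => f.dist_coe_le_dist x) x
  have hc : ContractingWith ⟨β₁ + β₂, hK⟩ (auxMap β₁ β₂ μ) := ⟨by exact_mod_cast hsub, hlip⟩
  obtain ⟨m, hm⟩ : ∃ m, auxMap β₁ β₂ μ m = m := ⟨_, hc.fixedPoint_isFixedPt⟩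
  have hfix : ∀ x, m x = Real.tanh (β₁ * (x + m x) + β₂ * ∫ y, m y ∂μ) := fun x =>
    (congrArg (fun f : BoundedContinuousFunction ℝ ℝ => f x) hm).symm
  have hIoo : ∀ x, m x ∈ Set.Ioo (-1 : ℝ) 1 := fun x => by
    rw [hfix x]
    exact aux_tanh_mem _
  have hIcc : ∀ x, m x ∈ Set.Icc (-1 : ℝ) 1 := fun x => Set.Ioo_subset_Icc_self (hIoo x)
  refine ⟨m, ⟨m.continuous.measurable, hIcc, hfix⟩, ?_, m.continuous, hIoo⟩
  intro n hn hnI hnfix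
  have hnint : Integrable n μ := Integrable.of_bound hn.aestronglyMeasurable 1
    (Filter.Eventually.of_forall fun x => abs_le.2 (hnI x))
  have key : ∀ k : ℕ, ∀ x, |n x - m x| ≤ (β₁ + β₂) ^ k * 2 := by
    intro k
    induction k with
    | zero =>
      intro x
      have := hnI x
      have := hIcc x
      simp only [Set.mem_Icc] at *
      rw [abs_le]
      constructor <;> linarith [hnI x]
    | succ k ih =>
      intro x
      rw [hnfix x, hfix x, pow_succ', mul_assoc]
      exact aux_contr β₁ β₂ h₁ h₂ μ n m hnint (m.integrable μ) _ ih x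
  funext x
  have hlim : Filter.Tendsto (fun k : ℕ => (β₁ + β₂) ^ k * 2) Filter.atTop (nhds 0) := by
    simpa using (tendsto_pow_atTop_nhds_zero_of_lt_one hK hsub).mul_const 2
  have h0 : |n x - m x| ≤ 0 := ge_of_tendsto' hlim fun k => key k x
  exact sub_eq_zero.1 (abs_nonpos_iff.1 h0)
end
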